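/- arXiv:1208.4656 — 2 statements merged into one kernel-verified Lean document; each statement's English description precedes it below -/
import Mathlib

section
/- Let r, t be positive integers, Σ an r×t real rectangular diagonal matrix with nonnegative diagonal entries ς₁₁,…,ς_{pp} (p = min(r,t)), Λ a t×t real diagonal matrix with nonnegative diagonal entries, and ε > 0. Define the r×t real rectangular diagonal matrix Δ* with diagonal entries Δ*ⱼⱼ = max{ςⱼⱼ − ε, 0} − ςⱼⱼ for j = 1,…,p. Then ‖Δ*‖₂ ≤ ε, and for every complex r×t matrix Δ with ‖Δ‖₂ ≤ ε one has det[I_r + (Σ+Δ*)Λ(Σ+Δ*)ᴴ] ≤ det[I_r + (Σ+Δ)Λ(Σ+Δ)ᴴ] (both determinants are positive reals, since the matrices are Hermitian positive definite). In particular, the minimum of Δ ↦ det[I_r + (Σ+Δ)Λ(Σ+Δ)ᴴ] over {Δ : ‖Δ‖₂ ≤ ε} is attained at a diagonal matrix. -/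
open Matrix

/-- The spectral norm (ℓ²→ℓ² operator norm, i.e. largest singular value) of a complex matrix. -/
noncomputable def specNorm {m n : ℕ} (A : Matrix (Fin m) (Fin n) ℂ) : ℝ :=
  ‖LinearMap.toContinuousLinearMap (Matrix.toEuclideanLin A)‖

/-- The `j`-th diagonal entry of a rectangular matrix, extended by `0` out of range. -/
noncomputable def diagEntry {r t : ℕ} (S : Matrix (Fin r) (Fin t) ℝ) (j : ℕ) : ℝ :=
  if h : j < r ∧ j < t then S ⟨j, h.1⟩ ⟨j, h.2⟩ else 0

/-!
Expanding in principal minors, `det (1 + M Λ Mᴴ) = ∑ S, (∏ j ∈ S, d j) * det (M_Sᴴ M_S)`, where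
`M_S` consists of the columns of `M` indexed by `S`. The weights are nonnegative, so it suffices to
compare the Gram determinants for each `S` separately. If `S` contains an index `j ≥ r` (counting
from `0`) or one with `ς_j ≤ ε`, the Gram determinant of `(Σ + Δ*)_S` vanishes. Otherwise
`(Σ + Δ)_S = W diag(ς) + F` with `W` an isometry and `‖F‖ ≤ ε`. Compression by `Wᴴ` can only
decrease the Gram determinant, and leaves the square matrix
`diag(ς) + Wᴴ F = diag(ς - ε) + (ε + Wᴴ F)`, whose second summand is accretive (its Hermitian part
is positive semidefinite). Adding an accretive matrix to a positive semidefinite one cannot decrease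
the modulus of the determinant: after conjugation this reads `|det (1 + B)| ≥ 1`, which holds
because `(1 + B)ᴴ (1 + B) = 1 + (B + Bᴴ + Bᴴ B)`.
-/

section DeterminantBounds

open scoped ComplexOrder MatrixOrder

theorem det_one_add_eq_sum_minors {n R : Type*} [Fintype n] [DecidableEq n] [CommRing R]
    (A : Matrix n n R) :
    (1 + A).det = ∑ S : Finset n, (A.submatrix (Subtype.val : S → n) Subtype.val).det := by
  rw [add_comm]
  exact (detRowAlternating.toMultilinearMap.map_add_univ A.row (1 : Matrix n n R).row).trans
    (Finset.sum_congr rfl fun S _ => det_piecewise_one_eq_submatrix_det A S)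

/-- The Gram determinant `det (Mᴴ M)` of the columns of `M`: the squared volume of the
parallelepiped they span. -/
def gramDet {m n R : Type*} [Fintype m] [Fintype n] [DecidableEq n] [CommRing R] [StarRing R]
    (M : Matrix m n R) : R :=
  (Mᴴ * M).det

theorem det_one_add_mul_diagonal_mul_conjTranspose {m n R : Type*} [Fintype m] [Fintype n]
    [DecidableEq m] [DecidableEq n] [CommRing R] [StarRing R] (M : Matrix m n R) (d : n → R) :
    (1 + M * diagonal d * Mᴴ).det =
      ∑ S : Finset n, (∏ j ∈ S, d j) * gramDet (M.submatrix id (Subtype.val : S → n)) := by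
  rw [Matrix.mul_assoc, det_one_add_mul_comm, Matrix.mul_assoc, det_one_add_eq_sum_minors]
  refine Finset.sum_congr rfl fun S _ => ?_
  have minor_eq : (diagonal d * (Mᴴ * M)).submatrix Subtype.val Subtype.val =
      diagonal (fun j : S => d j) *
        ((M.submatrix id Subtype.val)ᴴ * M.submatrix id (Subtype.val : S → n)) := by
    ext i j
    simp only [submatrix_apply, diagonal_mul]
    simp [mul_apply]
  rw [minor_eq, det_mul, det_diagonal, Finset.prod_coe_sort S d, gramDet]

variable {k m n 𝕜 : Type*} [Fintype k] [Fintype m] [Fintype n] [RCLike 𝕜]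

theorem one_le_det_one_add [DecidableEq n] {A : Matrix n n 𝕜} (hA : A.PosSemidef) :
    1 ≤ (1 + A).det := by
  rw [det_one_add_eq_sum_minors]
  simpa using Finset.single_le_sum
    (f := fun S : Finset n => (A.submatrix (Subtype.val : S → n) Subtype.val).det)
    (fun S _ => (hA.submatrix _).det_nonneg) (Finset.mem_univ ∅)

theorem gramDet_nonneg [DecidableEq n] (M : Matrix m n 𝕜) : 0 ≤ gramDet M :=
  (posSemidef_conjTranspose_mul_self M).det_nonneg

theorem gramDet_eq_norm_det_sq [DecidableEq n] (G : Matrix n n 𝕜) :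
    gramDet G = (‖G.det‖ : 𝕜) ^ 2 := by
  rw [gramDet, det_mul, det_conjTranspose, RCLike.star_def, RCLike.conj_mul]

theorem posSemidef_add_conjTranspose_of_re_nonneg {A : Matrix n n 𝕜}
    (hA : ∀ x, 0 ≤ RCLike.re (star x ⬝ᵥ A *ᵥ x)) : (A + Aᴴ).PosSemidef := by
  refine .of_dotProduct_mulVec_nonneg (isHermitian_add_transpose_self A) fun x => ?_
  have hstar : star x ⬝ᵥ Aᴴ *ᵥ x = star (star x ⬝ᵥ A *ᵥ x) := by
    rw [star_dotProduct, star_mulVec, conjTranspose_conjTranspose, dotProduct_mulVec]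
  rw [add_mulVec, dotProduct_add, hstar, RCLike.star_def, RCLike.add_conj]
  exact_mod_cast mul_nonneg zero_le_two (hA x)

theorem one_le_norm_det_one_add [DecidableEq n] {B : Matrix n n 𝕜} (hB : (B + Bᴴ).PosSemidef) :
    1 ≤ ‖(1 + B).det‖ := by
  have expand : (1 + B)ᴴ * (1 + B) = 1 + (B + Bᴴ + Bᴴ * B) := by
    rw [conjTranspose_add, conjTranspose_one]
    noncomm_ring
  have hsq := one_le_det_one_add (hB.add (posSemidef_conjTranspose_mul_self B))
  rw [← expand, ← gramDet, gramDet_eq_norm_det_sq] at hsq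
  exact (one_le_sq_iff₀ (norm_nonneg _)).mp (by exact_mod_cast hsq)

theorem norm_det_le_norm_det_add [DecidableEq n] {P A : Matrix n n 𝕜} (hP : P.PosSemidef)
    (hA : (A + Aᴴ).PosSemidef) : ‖P.det‖ ≤ ‖(P + A).det‖ := by
  by_cases hdet : P.det = 0
  · simp [hdet]
  obtain ⟨G, rfl⟩ : ∃ G : Matrix n n 𝕜, P = Gᴴ * G :=
    CStarAlgebra.nonneg_iff_eq_star_mul_self.mp hP.nonneg
  have hG : IsUnit G.det := by
    rw [det_mul] at hdet
    exact isUnit_iff_ne_zero.mpr (right_ne_zero_of_mul hdet)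
  have hGstar : Gᴴ * (G⁻¹)ᴴ = 1 := by
    rw [← conjTranspose_mul, nonsing_inv_mul _ hG, conjTranspose_one]
  have factor : Gᴴ * G + A = Gᴴ * (1 + (G⁻¹)ᴴ * A * G⁻¹) * G := by
    simp only [Matrix.mul_add, Matrix.add_mul, Matrix.mul_one, ← Matrix.mul_assoc, hGstar,
      Matrix.one_mul]
    rw [Matrix.mul_assoc A, nonsing_inv_mul _ hG, Matrix.mul_one]
  have accretive : ((G⁻¹)ᴴ * A * G⁻¹ + ((G⁻¹)ᴴ * A * G⁻¹)ᴴ).PosSemidef := by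
    convert hA.conjTranspose_mul_mul_same G⁻¹ using 1
    simp only [conjTranspose_mul, conjTranspose_conjTranspose, Matrix.mul_add, Matrix.add_mul,
      Matrix.mul_assoc]
  rw [factor, det_mul, det_mul, det_mul, mul_right_comm, norm_mul (_ * _)]
  exact le_mul_of_one_le_right (norm_nonneg _) (one_le_norm_det_one_add accretive)

theorem det_le_det_add [DecidableEq n] {A B : Matrix n n 𝕜} (hA : A.PosSemidef)
    (hB : B.PosSemidef) : A.det ≤ (A + B).det := by
  have hB' : (B + Bᴴ).PosSemidef := by
    rw [hB.isHermitian.eq]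
    exact hB.add hB
  rw [← RCLike.norm_of_nonneg' hA.det_nonneg, ← RCLike.norm_of_nonneg' (hA.add hB).det_nonneg]
  exact RCLike.ofReal_le_ofReal.mpr (norm_det_le_norm_det_add hA hB')

theorem gramDet_conjTranspose_mul_le [DecidableEq k] [DecidableEq n] {W : Matrix m k 𝕜}
    (hW : Wᴴ * W = 1) (M : Matrix m n 𝕜) : gramDet (Wᴴ * M) ≤ gramDet M := by
  classical
  have hidem : W * Wᴴ * (W * Wᴴ) = W * Wᴴ := by
    rw [Matrix.mul_assoc, ← Matrix.mul_assoc Wᴴ, hW, Matrix.one_mul]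
  have hproj : (1 - W * Wᴴ)ᴴ * (1 - W * Wᴴ) = 1 - W * Wᴴ := by
    simp [Matrix.sub_mul, Matrix.mul_sub, hidem]
  have pythagoras : Mᴴ * M =
      (Wᴴ * M)ᴴ * (Wᴴ * M) + ((1 - W * Wᴴ) * M)ᴴ * ((1 - W * Wᴴ) * M) := by
    rw [conjTranspose_mul (1 - _), Matrix.mul_assoc Mᴴ, ← Matrix.mul_assoc _ᴴ (1 - _), hproj]
    simp [Matrix.sub_mul, Matrix.mul_sub, Matrix.mul_assoc]
  rw [gramDet, gramDet, pythagoras]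
  exact det_le_det_add (posSemidef_conjTranspose_mul_self _) (posSemidef_conjTranspose_mul_self _)

end DeterminantBounds

section SpectralNorm

open scoped ComplexOrder Matrix.Norms.L2Operator

variable {k m n 𝕜 : Type*} [Fintype k] [Fintype m] [Fintype n] [RCLike 𝕜]
  [DecidableEq n]

theorem l2_opNorm_le_one_of_conjTranspose_mul_self_eq_one {W : Matrix m n 𝕜}
    (hW : Wᴴ * W = 1) : ‖W‖ ≤ 1 := by
  refine (sq_le_one_iff₀ (norm_nonneg W)).mp ?_
  rw [sq, ← l2_opNorm_conjTranspose_mul_self, hW, ← diagonal_one, l2_opNorm_diagonal]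
  exact (pi_norm_le_iff_of_nonneg zero_le_one).mpr fun _ => norm_one.le

theorem l2_opNorm_submatrix_id_le [DecidableEq k] (A : Matrix m n 𝕜)
    {f : k → n} (hf : f.Injective) : ‖A.submatrix id f‖ ≤ ‖A‖ := by
  set J : Matrix n k 𝕜 := (1 : Matrix n n 𝕜).submatrix id f
  have hJ : Jᴴ * J = 1 := by
    rw [conjTranspose_submatrix, conjTranspose_one, ← submatrix_mul _ _ _ _ _ Function.bijective_id,
      Matrix.one_mul, submatrix_one f hf]
  have hAJ : A.submatrix id f = A * J := by
    rw [← submatrix_id_id A, ← submatrix_mul _ _ _ _ _ Function.bijective_id, Matrix.mul_one]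
    rfl
  calc ‖A.submatrix id f‖ ≤ ‖A‖ * ‖J‖ := hAJ ▸ l2_opNorm_mul A J
    _ ≤ ‖A‖ := mul_le_of_le_one_right (norm_nonneg A)
      (l2_opNorm_le_one_of_conjTranspose_mul_self_eq_one hJ)

theorem neg_mul_norm_sq_le_re_star_dotProduct_mulVec {F : Matrix n n 𝕜} {ε : ℝ} (hF : ‖F‖ ≤ ε)
    (x : n → 𝕜) : -(ε * ‖WithLp.toLp 2 x‖ ^ 2) ≤ RCLike.re (star x ⬝ᵥ F *ᵥ x) := by
  have hbound : ‖star x ⬝ᵥ F *ᵥ x‖ ≤ ε * ‖WithLp.toLp 2 x‖ ^ 2 := by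
    calc ‖star x ⬝ᵥ F *ᵥ x‖ = ‖inner 𝕜 (WithLp.toLp 2 x) (WithLp.toLp 2 (F *ᵥ x))‖ := by
          rw [EuclideanSpace.inner_toLp_toLp, dotProduct_comm]
      _ ≤ ‖WithLp.toLp 2 x‖ * (‖F‖ * ‖WithLp.toLp 2 x‖) :=
          (norm_inner_le_norm _ _).trans (by gcongr; exact l2_opNorm_mulVec F (WithLp.toLp 2 x))
      _ ≤ ‖WithLp.toLp 2 x‖ * (ε * ‖WithLp.toLp 2 x‖) := by gcongr
      _ = ε * ‖WithLp.toLp 2 x‖ ^ 2 := by ring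
  linarith [neg_abs_le (RCLike.re (star x ⬝ᵥ F *ᵥ x)), RCLike.abs_re_le_norm (star x ⬝ᵥ F *ᵥ x)]

theorem posSemidef_smul_one_add_add_conjTranspose {F : Matrix n n 𝕜} {ε : ℝ} (hF : ‖F‖ ≤ ε) :
    (((ε : 𝕜) • 1 + F) + ((ε : 𝕜) • 1 + F)ᴴ).PosSemidef := by
  refine posSemidef_add_conjTranspose_of_re_nonneg fun x => ?_
  have hnorm : RCLike.re (star x ⬝ᵥ x) = ‖WithLp.toLp 2 x‖ ^ 2 := by
    rw [dotProduct_comm, ← EuclideanSpace.inner_toLp_toLp, inner_self_eq_norm_sq]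
  rw [add_mulVec, smul_mulVec, one_mulVec, dotProduct_add, dotProduct_smul, smul_eq_mul, map_add,
    RCLike.re_ofReal_mul, hnorm]
  linarith [neg_mul_norm_sq_le_re_star_dotProduct_mulVec hF x]

theorem prod_sub_le_norm_det_diagonal_add {F : Matrix n n 𝕜} {ε : ℝ} (hF : ‖F‖ ≤ ε)
    {s : n → ℝ} (hs : ∀ i, ε ≤ s i) :
    ∏ i, (s i - ε) ≤ ‖(diagonal (fun i => (s i : 𝕜)) + F).det‖ := by
  have split : diagonal (fun i => (s i : 𝕜)) + F =
      diagonal (fun i => ((s i - ε : ℝ) : 𝕜)) + ((ε : 𝕜) • 1 + F) := by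
    rw [smul_one_eq_diagonal, ← add_assoc, diagonal_add]
    simp
  have hP : (diagonal fun i => ((s i - ε : ℝ) : 𝕜)).PosSemidef :=
    .diagonal fun i => RCLike.ofReal_nonneg.mpr (sub_nonneg.mpr (hs i))
  calc ∏ i, (s i - ε) = ‖(diagonal fun i => ((s i - ε : ℝ) : 𝕜)).det‖ := by
        rw [det_diagonal, ← RCLike.ofReal_prod,
          RCLike.norm_of_nonneg (Finset.prod_nonneg fun i _ => sub_nonneg.mpr (hs i))]
    _ ≤ ‖(diagonal (fun i => (s i : 𝕜)) + F).det‖ :=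
        split ▸ norm_det_le_norm_det_add hP (posSemidef_smul_one_add_add_conjTranspose hF)

theorem prod_sub_sq_le_gramDet_isometry_mul_diagonal_add {W F : Matrix m n 𝕜}
    (hW : Wᴴ * W = 1) {ε : ℝ} (hF : ‖F‖ ≤ ε) {s : n → ℝ} (hs : ∀ i, ε ≤ s i) :
    ((∏ i, (s i - ε) ^ 2 : ℝ) : 𝕜) ≤
      gramDet (W * diagonal (fun i => (s i : 𝕜)) + F) := by
  classical
  have hWF : ‖Wᴴ * F‖ ≤ ε := by
    calc ‖Wᴴ * F‖ ≤ ‖Wᴴ‖ * ‖F‖ := l2_opNorm_mul _ _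
      _ ≤ ‖F‖ := mul_le_of_le_one_left (norm_nonneg F) <| by
        rw [l2_opNorm_conjTranspose]
        exact l2_opNorm_le_one_of_conjTranspose_mul_self_eq_one hW
      _ ≤ ε := hF
  refine le_trans ?_ (gramDet_conjTranspose_mul_le hW _)
  rw [Matrix.mul_add, ← Matrix.mul_assoc, hW, Matrix.one_mul, gramDet_eq_norm_det_sq,
    Finset.prod_pow]
  have hprod : 0 ≤ ∏ i, (s i - ε) := Finset.prod_nonneg fun i _ => sub_nonneg.mpr (hs i)
  exact_mod_cast pow_le_pow_left₀ hprod (prod_sub_le_norm_det_diagonal_add hWF hs) 2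

end SpectralNorm

section RectDiagonal

open scoped ComplexOrder Matrix.Norms.L2Operator

/-- The `r × t` rectangular diagonal matrix with `(j, j)` entry `s j`, the analogue of
`Matrix.diagonal` for the form taken by the singular values of a matrix. -/
def rectDiagonal {R : Type*} [Zero R] (r t : ℕ) (s : ℕ → R) : Matrix (Fin r) (Fin t) R :=
  of fun i j => if (i : ℕ) = j then s j else 0

variable {r t : ℕ} {𝕜 : Type*} [RCLike 𝕜]

theorem conjTranspose_mul_self_rectDiagonal {R : Type*} [NonUnitalSemiring R] [StarRing R]
    (s : ℕ → R) :
    (rectDiagonal r t s)ᴴ * rectDiagonal r t s =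
      diagonal fun j : Fin t => if (j : ℕ) < r then star (s j) * s j else 0 := by
  ext j k
  have hcol (i : Fin r) : star (rectDiagonal r t s i j) * rectDiagonal r t s i k =
      if (i : ℕ) = j then (if j = k then star (s j) * s j else 0) else 0 := by
    by_cases hij : (i : ℕ) = j <;> by_cases hjk : j = k <;> simp_all [rectDiagonal, Fin.ext_iff]
  have hrow (c : R) :
      ∑ i : Fin r, (if (i : ℕ) = j then c else 0) = if (j : ℕ) < r then c else 0 := by
    split_ifs with hj
    · rw [Fintype.sum_eq_single (⟨j, hj⟩ : Fin r)] <;> simp +contextual [Fin.ext_iff]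
    · exact Finset.sum_eq_zero fun i _ => if_neg fun h : (i : ℕ) = j => hj (h ▸ i.isLt)
  simp only [mul_apply, conjTranspose_apply, hcol, hrow, diagonal_apply]
  split_ifs <;> rfl

theorem l2_opNorm_rectDiagonal_le {s : ℕ → 𝕜} {ε : ℝ} (hε : 0 ≤ ε) (hs : ∀ j, ‖s j‖ ≤ ε) :
    ‖rectDiagonal r t s‖ ≤ ε := by
  refine (pow_le_pow_iff_left₀ (norm_nonneg _) hε two_ne_zero).mp ?_
  rw [sq, ← l2_opNorm_conjTranspose_mul_self, conjTranspose_mul_self_rectDiagonal,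
    l2_opNorm_diagonal]
  refine (pi_norm_le_iff_of_nonneg (sq_nonneg ε)).mpr fun j => ?_
  split_ifs
  · rw [norm_mul, norm_star, ← sq]
    exact pow_le_pow_left₀ (norm_nonneg _) (hs j) 2
  · simpa using sq_nonneg ε

theorem gram_submatrix_rectDiagonal {R : Type*} [NonUnitalSemiring R] [StarRing R] (s : ℕ → R)
    (S : Finset (Fin t)) :
    ((rectDiagonal r t s).submatrix id Subtype.val)ᴴ *
        (rectDiagonal r t s).submatrix id (Subtype.val : S → Fin t) =
      diagonal fun j : S => if (j : ℕ) < r then star (s j) * s j else 0 := by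
  rw [conjTranspose_submatrix, ← submatrix_mul _ _ _ _ _ Function.bijective_id,
    conjTranspose_mul_self_rectDiagonal, submatrix_diagonal _ _ Subtype.val_injective]
  rfl

theorem gramDet_submatrix_rectDiagonal_max_sub_le {Δ : Matrix (Fin r) (Fin t) 𝕜} {ε : ℝ}
    (hΔ : ‖Δ‖ ≤ ε) (s : ℕ → ℝ) (S : Finset (Fin t)) :
    gramDet ((rectDiagonal r t fun j => ((max (s j - ε) 0 : ℝ) : 𝕜)).submatrix id
        (Subtype.val : S → Fin t)) ≤
      gramDet ((rectDiagonal r t (fun j => (s j : 𝕜)) + Δ).submatrix id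
        (Subtype.val : S → Fin t)) := by
  rw [gramDet, gram_submatrix_rectDiagonal, det_diagonal]
  by_cases hS : ∀ j : S, (j : ℕ) < r ∧ ε ≤ s j
  · set W : Matrix (Fin r) S 𝕜 := (rectDiagonal r t 1).submatrix id Subtype.val
    have hW : Wᴴ * W = 1 := by
      rw [gram_submatrix_rectDiagonal, ← diagonal_one]
      simp [hS]
    have hΔS : ‖Δ.submatrix id (Subtype.val : S → Fin t)‖ ≤ ε :=
      (l2_opNorm_submatrix_id_le Δ Subtype.val_injective).trans hΔ
    have hM : (rectDiagonal r t (fun j => (s j : 𝕜)) + Δ).submatrix id (Subtype.val : S → Fin t) =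
        W * diagonal (fun j : S => (s j : 𝕜)) + Δ.submatrix id Subtype.val := by
      ext i j
      simp [W, rectDiagonal, mul_diagonal]
    rw [hM]
    refine le_of_eq_of_le ?_
      (prod_sub_sq_le_gramDet_isometry_mul_diagonal_add hW hΔS fun j => (hS j).2)
    rw [RCLike.ofReal_prod]
    refine Finset.prod_congr rfl fun j _ => ?_
    rw [if_pos (hS j).1, max_eq_left (sub_nonneg.mpr (hS j).2)]
    simp [sq]
  · obtain ⟨j, hj⟩ := not_forall.mp hS
    rw [Finset.prod_eq_zero (Finset.mem_univ j)]
    · exact gramDet_nonneg _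
    · grind

theorem det_one_add_rectDiagonal_max_sub_le {Δ : Matrix (Fin r) (Fin t) 𝕜} {ε : ℝ}
    (hΔ : ‖Δ‖ ≤ ε) (s : ℕ → ℝ) {d : Fin t → ℝ} (hd : ∀ j, 0 ≤ d j) :
    (1 + rectDiagonal r t (fun j => ((max (s j - ε) 0 : ℝ) : 𝕜)) * diagonal (fun j => (d j : 𝕜)) *
      (rectDiagonal r t fun j => ((max (s j - ε) 0 : ℝ) : 𝕜))ᴴ).det ≤
    (1 + (rectDiagonal r t (fun j => (s j : 𝕜)) + Δ) * diagonal (fun j => (d j : 𝕜)) *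
      (rectDiagonal r t (fun j => (s j : 𝕜)) + Δ)ᴴ).det := by
  rw [det_one_add_mul_diagonal_mul_conjTranspose, det_one_add_mul_diagonal_mul_conjTranspose]
  exact Finset.sum_le_sum fun S _ => mul_le_mul_of_nonneg_left
    (gramDet_submatrix_rectDiagonal_max_sub_le hΔ s S)
    (Finset.prod_nonneg fun j _ => RCLike.ofReal_nonneg.mpr (hd j))

theorem diagEntry_eq_apply (S : Matrix (Fin r) (Fin t) ℝ) {i : Fin r} {j : Fin t}
    (hij : (i : ℕ) = j) : diagEntry S j = S i j := by
  rw [diagEntry, dif_pos ⟨hij ▸ i.isLt, j.isLt⟩]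
  exact congrArg (S · j) (Fin.ext hij.symm)

theorem rectDiagonal_diagEntry {R : Type*} [Zero R] (S : Matrix (Fin r) (Fin t) ℝ) (f : ℝ → R) :
    rectDiagonal r t (fun j => f (diagEntry S j)) =
      of fun (i : Fin r) (j : Fin t) => if (i : ℕ) = j then f (S i j) else 0 := by
  ext i j
  by_cases hij : (i : ℕ) = j
  · simp [rectDiagonal, hij, diagEntry_eq_apply S hij]
  · simp [rectDiagonal, hij]

theorem rectDiagonal_add {R : Type*} [AddZeroClass R] (s s' : ℕ → R) :
    rectDiagonal r t s + rectDiagonal r t s' = rectDiagonal r t (s + s') := by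
  ext i j
  simp only [rectDiagonal, Matrix.add_apply, of_apply, Pi.add_apply]
  split_ifs <;> simp

theorem abs_max_sub_zero_sub_self_le {x ε : ℝ} (hx : 0 ≤ x) (hε : 0 ≤ ε) :
    |max (x - ε) 0 - x| ≤ ε := by
  grind

theorem stmt0_general (Sig : Matrix (Fin r) (Fin t) ℝ)
    (hSdiag : ∀ (i : Fin r) (j : Fin t), (i : ℕ) ≠ (j : ℕ) → Sig i j = 0)
    (hSpos : ∀ j, 0 ≤ diagEntry Sig j) (d : Fin t → ℝ) (hd : ∀ i, 0 ≤ d i) (ε : ℝ) (hε : 0 ≤ ε) :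
    let Δstar : Matrix (Fin r) (Fin t) 𝕜 := fun (i : Fin r) (j : Fin t) =>
      if (i : ℕ) = (j : ℕ) then ((max (Sig i j - ε) 0 - Sig i j : ℝ) : 𝕜) else 0
    let SigK : Matrix (Fin r) (Fin t) 𝕜 := Sig.map RCLike.ofReal
    let Λ : Matrix (Fin t) (Fin t) 𝕜 := diagonal fun i => (d i : 𝕜)
    ‖Δstar‖ ≤ ε ∧
    ∀ Δ : Matrix (Fin r) (Fin t) 𝕜, ‖Δ‖ ≤ ε →
      0 < (1 + (SigK + Δ) * Λ * (SigK + Δ)ᴴ).det ∧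
      (1 + (SigK + Δstar) * Λ * (SigK + Δstar)ᴴ).det ≤
        (1 + (SigK + Δ) * Λ * (SigK + Δ)ᴴ).det := by
  intro Δstar SigK Λ
  have hSig : SigK = rectDiagonal r t fun j => (diagEntry Sig j : 𝕜) := by
    rw [rectDiagonal_diagEntry Sig RCLike.ofReal]
    ext i j
    by_cases hij : (i : ℕ) = j <;> simp [SigK, hij, hSdiag i j]
  have hΔstar : Δstar = rectDiagonal r t fun j =>
      ((max (diagEntry Sig j - ε) 0 - diagEntry Sig j : ℝ) : 𝕜) :=
    (rectDiagonal_diagEntry Sig fun x => ((max (x - ε) 0 - x : ℝ) : 𝕜)).symm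
  have hsum : SigK + Δstar =
      rectDiagonal r t fun j => ((max (diagEntry Sig j - ε) 0 : ℝ) : 𝕜) := by
    simp [hSig, hΔstar, rectDiagonal_add, Pi.add_def]
  refine ⟨?_, fun Δ hΔ => ⟨?_, ?_⟩⟩
  · rw [hΔstar]
    refine l2_opNorm_rectDiagonal_le hε fun j => ?_
    rw [RCLike.norm_ofReal]
    exact abs_max_sub_zero_sub_self_le (hSpos j) hε
  · have hΛ : Λ.PosSemidef := .diagonal fun i => RCLike.ofReal_nonneg.mpr (hd i)
    exact (PosDef.one.add_posSemidef (hΛ.mul_mul_conjTranspose_same (SigK + Δ))).det_pos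
  · rw [hsum, hSig]
    exact det_one_add_rectDiagonal_max_sub_le hΔ (diagEntry Sig) hd

end RectDiagonal

theorem stmt0 (r t : ℕ) (hr : 0 < r) (ht : 0 < t)
    (Sig : Matrix (Fin r) (Fin t) ℝ)
    (hSdiag : ∀ (i : Fin r) (j : Fin t), (i : ℕ) ≠ (j : ℕ) → Sig i j = 0)
    (hSpos : ∀ j, 0 ≤ diagEntry Sig j)
    (d : Fin t → ℝ) (hd : ∀ i, 0 ≤ d i)
    (ε : ℝ) (hε : 0 < ε) :
    -- Δ* : the rectangular diagonal matrix with entries max{ς_jj − ε, 0} − ς_jj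
    let Δstar : Matrix (Fin r) (Fin t) ℂ := fun (i : Fin r) (j : Fin t) =>
      if (i : ℕ) = (j : ℕ) then ((max (Sig i j - ε) 0 - Sig i j : ℝ) : ℂ) else 0
    let SigC : Matrix (Fin r) (Fin t) ℂ := Sig.map Complex.ofReal
    let Λ : Matrix (Fin t) (Fin t) ℂ := Matrix.diagonal fun i => (d i : ℂ)
    -- ‖Δ*‖₂ ≤ ε, and Δ* minimizes the determinant over the spectral-norm ball
    specNorm Δstar ≤ ε ∧
    ∀ Δ : Matrix (Fin r) (Fin t) ℂ, specNorm Δ ≤ ε →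
      0 < ((1 + (SigC + Δ) * Λ * (SigC + Δ)ᴴ).det).re ∧
      ((1 + (SigC + Δ) * Λ * (SigC + Δ)ᴴ).det).im = 0 ∧
      ((1 + (SigC + Δstar) * Λ * (SigC + Δstar)ᴴ).det).re ≤
        ((1 + (SigC + Δ) * Λ * (SigC + Δ)ᴴ).det).re := by
  intro Δstar SigC Λ
  obtain ⟨hnorm, hmin⟩ := stmt0_general (𝕜 := ℂ) Sig hSdiag hSpos d hd ε hε.le
  refine ⟨hnorm, fun Δ hΔ => ?_⟩
  obtain ⟨hpos, hle⟩ := hmin Δ hΔ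
  exact ⟨(Complex.lt_def.mp hpos).1, (Complex.lt_def.mp hpos).2.symm, (Complex.le_def.mp hle).1⟩
end

section
/- Let r, t be positive integers, Σ an r×t real rectangular diagonal matrix with nonnegative diagonal entries, ε > 0, and Δ a complex r×t matrix with spectral norm ‖Δ‖₂ ≤ ε. Set A := (Σ+Δ)ᴴ(Σ+Δ), a t×t positive semidefinite Hermitian matrix. Then for every subset S of {1,…,t}, the principal submatrix A(S) (keeping the rows and columns of A indexed by S) satisfies det[A(S)] ≥ ∏_{j∈S} max{ςⱼⱼ − ε, 0}², where ςⱼⱼ := 0 for min(r,t) < j ≤ t. -/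
open Matrix

/-!
If `Y` is positive semidefinite and `Z` has numerical range in the right half-plane, then
`|det Y| ≤ |det (Y + Z)|`: for invertible `Y`, a solution of `Z x = (μ - 1) Y x` with `x ≠ 0` forces
`Re μ ≥ 1`, so every eigenvalue of `Y⁻¹ (Y + Z)` has modulus at least one. This is used twice.
With `Z = ε + E`, `‖E‖ ≤ ε`, it bounds `|det (diag d + E)|` below by `∏ (|d j| - ε)`, after the
phases of the `d j` have been absorbed into `E`. With `Y = (Vᴴ B)ᴴ (Vᴴ B)` and `Y + Z = Bᴴ B`, it
bounds the Gram determinant of `B` below by `|det (Vᴴ B)| ^ 2` for any isometry `V`. When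
`ε < |ςⱼⱼ|` for all `j ∈ S`, the indices in `S` also label rows, and both bounds apply to the square
block of `Σ + Δ` on `S`; otherwise the product vanishes.
-/

open scoped ComplexOrder Matrix.Norms.L2Operator

section Accretive

variable {n : Type*} [Fintype n] {Y Z : Matrix n n ℂ}

theorem one_le_re_of_add_mulVec_eq_smul_mulVec (hY : Y.PosDef)
    (hZ : ∀ x, 0 ≤ (star x ⬝ᵥ Z *ᵥ x).re) {x : n → ℂ} (hx : x ≠ 0) {μ : ℂ}
    (h : (Y + Z) *ᵥ x = μ • Y *ᵥ x) : 1 ≤ μ.re := by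
  obtain ⟨y_pos, y_im⟩ := Complex.pos_iff.1 (hY.dotProduct_mulVec_pos hx)
  have form_eq : (star x ⬝ᵥ Y *ᵥ x).re + (star x ⬝ᵥ Z *ᵥ x).re
      = μ.re * (star x ⬝ᵥ Y *ᵥ x).re := by
    simpa [add_mulVec, ← y_im] using congrArg (fun v ↦ (star x ⬝ᵥ v).re) h
  exact le_of_mul_le_mul_right (by linarith [hZ x]) y_pos

variable [DecidableEq n]

theorem one_le_norm_det_of_forall_spectrum {A : Matrix n n ℂ}
    (hA : ∀ μ ∈ spectrum ℂ A, 1 ≤ ‖μ‖) : 1 ≤ ‖A.det‖ := by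
  rw [det_eq_prod_roots_charpoly]
  refine Multiset.prod_induction (1 ≤ ‖·‖) _ (fun a b ha hb ↦ ?_) norm_one.ge fun μ hμ ↦
    hA μ (mem_spectrum_iff_isRoot_charpoly.2 (Polynomial.isRoot_of_mem_roots hμ))
  rw [norm_mul]
  exact one_le_mul_of_one_le_of_one_le ha hb

theorem exists_mulVec_eq_smul_of_mem_spectrum {K : Type*} [Field K] {A : Matrix n n K} {μ : K}
    (hμ : μ ∈ spectrum K A) : ∃ x ≠ 0, A *ᵥ x = μ • x := by
  rw [← spectrum_toLin', ← Module.End.hasEigenvalue_iff_mem_spectrum] at hμ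
  obtain ⟨x, hx⟩ := hμ.exists_hasEigenvector
  exact ⟨x, hx.2, by simpa using hx.apply_eq_smul⟩

theorem norm_det_le_norm_det_add_s5 (hY : Y.PosSemidef)
    (hZ : ∀ x, 0 ≤ (star x ⬝ᵥ Z *ᵥ x).re) : ‖Y.det‖ ≤ ‖(Y + Z).det‖ := by
  by_cases hdet : Y.det = 0
  · simp [hdet]
  have factor : Y + Z = Y * (Y⁻¹ * (Y + Z)) :=
    (mul_nonsing_inv_cancel_left Y (Y + Z) (isUnit_iff_ne_zero.2 hdet)).symm
  have quotient_det : 1 ≤ ‖(Y⁻¹ * (Y + Z)).det‖ := by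
    refine one_le_norm_det_of_forall_spectrum fun μ hμ ↦ ?_
    obtain ⟨x, hx, hμx⟩ := exists_mulVec_eq_smul_of_mem_spectrum hμ
    have pencil : (Y + Z) *ᵥ x = μ • Y *ᵥ x := by
      rw [factor, ← mulVec_mulVec, hμx, mulVec_smul]
    exact (one_le_re_of_add_mulVec_eq_smul_mulVec (hY.posDef_iff_det_ne_zero.2 hdet) hZ hx
      pencil).trans (Complex.re_le_norm μ)
  rw [factor, det_mul, norm_mul]
  exact le_mul_of_one_le_right (norm_nonneg _) quotient_det

end Accretive

section DiagonalPerturbation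

variable {n : Type*} [Fintype n] [DecidableEq n] {E : Matrix n n ℂ} {ε : ℝ}

theorem norm_star_dotProduct_mulVec_le {𝕜 : Type*} [RCLike 𝕜] (A : Matrix n n 𝕜) (x : n → 𝕜) :
    ‖star x ⬝ᵥ A *ᵥ x‖ ≤ ‖A‖ * ‖WithLp.toLp 2 x‖ ^ 2 := by
  calc ‖star x ⬝ᵥ A *ᵥ x‖
      = ‖inner 𝕜 (WithLp.toLp 2 x) (WithLp.toLp 2 (A *ᵥ x))‖ := by
        rw [EuclideanSpace.inner_toLp_toLp, dotProduct_comm]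
    _ ≤ ‖WithLp.toLp 2 x‖ * ‖WithLp.toLp 2 (A *ᵥ x)‖ := norm_inner_le_norm _ _
    _ ≤ ‖WithLp.toLp 2 x‖ * (‖A‖ * ‖WithLp.toLp 2 x‖) := by
        gcongr
        exact l2_opNorm_mulVec A (WithLp.toLp 2 x)
    _ = ‖A‖ * ‖WithLp.toLp 2 x‖ ^ 2 := by ring

theorem re_star_dotProduct_smul_one_add_mulVec_nonneg (hE : ‖E‖ ≤ ε) (x : n → ℂ) :
    0 ≤ (star x ⬝ᵥ ((ε : ℂ) • (1 : Matrix n n ℂ) + E) *ᵥ x).re := by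
  have norm_form : (star x ⬝ᵥ x) = ((‖WithLp.toLp 2 x‖ ^ 2 : ℝ) : ℂ) := by
    rw [dotProduct_comm, ← EuclideanSpace.inner_toLp_toLp, inner_self_eq_norm_sq_to_K]
    simp
  have E_form : -(ε * ‖WithLp.toLp 2 x‖ ^ 2) ≤ (star x ⬝ᵥ E *ᵥ x).re :=
    (abs_le.1 ((Complex.abs_re_le_norm _).trans ((norm_star_dotProduct_mulVec_le E x).trans
      (by gcongr)))).1
  rw [add_mulVec, smul_mulVec, one_mulVec, dotProduct_add, dotProduct_smul, norm_form, smul_eq_mul,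
    ← Complex.ofReal_mul, Complex.add_re, Complex.ofReal_re]
  linarith

theorem prod_sub_le_norm_det_diagonal_ofReal_add {d : n → ℝ} (hE : ‖E‖ ≤ ε) (hd : ∀ j, ε ≤ d j) :
    ∏ j, (d j - ε) ≤ ‖(diagonal (fun j ↦ (d j : ℂ)) + E).det‖ := by
  have posSemidef : (diagonal fun j ↦ ((d j - ε : ℝ) : ℂ)).PosSemidef :=
    .diagonal fun j ↦ Complex.zero_le_real.2 (sub_nonneg.2 (hd j))
  have split : diagonal (fun j ↦ (d j : ℂ)) + E
      = diagonal (fun j ↦ ((d j - ε : ℝ) : ℂ)) + ((ε : ℂ) • (1 : Matrix n n ℂ) + E) := by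
    rw [smul_one_eq_diagonal, ← add_assoc, diagonal_add]
    simp
  calc ∏ j, (d j - ε) = ‖(diagonal fun j ↦ ((d j - ε : ℝ) : ℂ)).det‖ := by
        rw [det_diagonal, ← Complex.ofReal_prod, Complex.norm_of_nonneg]
        exact Finset.prod_nonneg fun j _ ↦ sub_nonneg.2 (hd j)
    _ ≤ ‖(diagonal (fun j ↦ (d j : ℂ)) + E).det‖ := by
        rw [split]
        exact norm_det_le_norm_det_add_s5 posSemidef
          (re_star_dotProduct_smul_one_add_mulVec_nonneg hE)

theorem prod_norm_sub_le_norm_det_diagonal_add {d : n → ℂ} (hE : ‖E‖ ≤ ε)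
    (hd : ∀ j, ε ≤ ‖d j‖) : ∏ j, (‖d j‖ - ε) ≤ ‖(diagonal d + E).det‖ := by
  choose u u_norm u_mul using fun j ↦ Complex.exists_norm_eq_mul_self (d j)
  have rotated_norm : ‖diagonal u * E‖ ≤ ε := by
    have diagonal_norm : ‖diagonal u‖ ≤ 1 := by
      rw [l2_opNorm_diagonal]
      exact (pi_norm_le_iff_of_nonneg zero_le_one).2 fun j ↦ (u_norm j).le
    calc ‖diagonal u * E‖ ≤ ‖diagonal u‖ * ‖E‖ := l2_opNorm_mul _ _
      _ ≤ ‖E‖ := mul_le_of_le_one_left (norm_nonneg _) diagonal_norm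
      _ ≤ ε := hE
  have rotated : diagonal (fun j ↦ (‖d j‖ : ℂ)) + diagonal u * E
      = diagonal u * (diagonal d + E) := by
    simp only [mul_add, diagonal_mul_diagonal, u_mul]
  calc ∏ j, (‖d j‖ - ε)
      ≤ ‖(diagonal u * (diagonal d + E)).det‖ :=
        rotated ▸ prod_sub_le_norm_det_diagonal_ofReal_add rotated_norm hd
    _ = ‖(diagonal d + E).det‖ := by simp [det_mul, det_diagonal, norm_prod, u_norm]

end DiagonalPerturbation

section Compression

variable {m n s : Type*} [Fintype m] [Fintype n] [Fintype s] [DecidableEq s]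

theorem l2_opNorm_le_one_of_conjTranspose_mul_self_eq_one_s5 {𝕜 : Type*} [RCLike 𝕜]
    {V : Matrix m s 𝕜} (hV : Vᴴ * V = 1) : ‖V‖ ≤ 1 := by
  have norm_sq : ‖V‖ ^ 2 ≤ 1 := by
    rw [sq, ← l2_opNorm_conjTranspose_mul_self, hV, ← diagonal_one, l2_opNorm_diagonal]
    exact (pi_norm_le_iff_of_nonneg zero_le_one).2 fun _ ↦ norm_one.le
  exact (sq_le_one_iff₀ (norm_nonneg V)).1 norm_sq

theorem l2_opNorm_conjTranspose_mul_mul_le [DecidableEq n] {𝕜 : Type*} [RCLike 𝕜]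
    {V : Matrix m s 𝕜} {W : Matrix n s 𝕜}
    (hV : Vᴴ * V = 1) (hW : Wᴴ * W = 1) (A : Matrix m n 𝕜) : ‖Vᴴ * A * W‖ ≤ ‖A‖ := by
  classical
  calc ‖Vᴴ * A * W‖ ≤ ‖V‖ * ‖A‖ * ‖W‖ := by
        rw [← l2_opNorm_conjTranspose V]
        exact (l2_opNorm_mul _ _).trans (by gcongr; exact l2_opNorm_mul _ _)
    _ ≤ 1 * ‖A‖ * 1 := by
        gcongr
        exacts [l2_opNorm_le_one_of_conjTranspose_mul_self_eq_one_s5 hV,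
          l2_opNorm_le_one_of_conjTranspose_mul_self_eq_one_s5 hW]
    _ = ‖A‖ := by ring

theorem sq_norm_det_conjTranspose_mul_le {V : Matrix m s ℂ} (hV : Vᴴ * V = 1)
    (B : Matrix m s ℂ) : ‖(Vᴴ * B).det‖ ^ 2 ≤ ‖(Bᴴ * B).det‖ := by
  set P := Vᴴ * B with hP
  set Q := B - V * P with hQ
  have VQ : Vᴴ * Q = 0 := by
    rw [hQ, Matrix.mul_sub, ← Matrix.mul_assoc, hV, Matrix.one_mul, sub_self]
  have pythagoras : Bᴴ * B = Pᴴ * P + Qᴴ * Q := by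
    have orthogonal : Qᴴ * Q = Bᴴ * Q := by
      nth_rw 1 [hQ]
      rw [conjTranspose_sub, conjTranspose_mul, Matrix.sub_mul, Matrix.mul_assoc, VQ,
        Matrix.mul_zero, sub_zero]
    have projected : Bᴴ * Q = Bᴴ * B - Pᴴ * P := by
      rw [hQ, Matrix.mul_sub, ← Matrix.mul_assoc, hP, conjTranspose_mul,
        conjTranspose_conjTranspose]
    rw [orthogonal, projected, add_sub_cancel]
  calc ‖P.det‖ ^ 2 = ‖(Pᴴ * P).det‖ := by
        rw [det_mul, det_conjTranspose, norm_mul, norm_star, sq]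
    _ ≤ ‖(Bᴴ * B).det‖ := by
        rw [pythagoras]
        exact norm_det_le_norm_det_add_s5 (posSemidef_conjTranspose_mul_self P)
          (posSemidef_conjTranspose_mul_self Q).re_dotProduct_nonneg

theorem sq_prod_norm_sub_le_norm_det_gram [DecidableEq n] {V : Matrix m s ℂ} {W : Matrix n s ℂ}
    (hV : Vᴴ * V = 1) (hW : Wᴴ * W = 1) {A D : Matrix m n ℂ} {d : s → ℂ}
    (hA : Vᴴ * A * W = diagonal d) {ε : ℝ} (hD : ‖D‖ ≤ ε) (hd : ∀ j, ε ≤ ‖d j‖) :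
    (∏ j, (‖d j‖ - ε)) ^ 2 ≤ ‖(((A + D) * W)ᴴ * ((A + D) * W)).det‖ := by
  have compressed : Vᴴ * ((A + D) * W) = diagonal d + Vᴴ * D * W := by
    rw [← hA, Matrix.add_mul, Matrix.mul_add, Matrix.mul_assoc, Matrix.mul_assoc]
  calc (∏ j, (‖d j‖ - ε)) ^ 2 ≤ ‖(Vᴴ * ((A + D) * W)).det‖ ^ 2 := by
        rw [compressed]
        exact pow_le_pow_left₀ (Finset.prod_nonneg fun j _ ↦ sub_nonneg.2 (hd j))
          (prod_norm_sub_le_norm_det_diagonal_add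
            ((l2_opNorm_conjTranspose_mul_mul_le hV hW D).trans hD) hd) 2
    _ ≤ ‖(((A + D) * W)ᴴ * ((A + D) * W)).det‖ := sq_norm_det_conjTranspose_mul_le hV _

end Compression

section Coordinates

variable {m n s : Type*}

/-- The matrix whose columns are the standard basis vectors indexed by `f`. For injective `f` it is
an isometry, and compressing by two such matrices selects a submatrix. -/
def coordMatrix (R : Type*) [Zero R] [One R] [DecidableEq m] (f : s → m) : Matrix m s R :=
  (1 : Matrix m m R).submatrix id f

theorem mul_coordMatrix {R : Type*} [NonAssocSemiring R] [Fintype m] [DecidableEq m]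
    (A : Matrix n m R) (f : s → m) : A * coordMatrix R f = A.submatrix id f := by
  ext i j
  simp [coordMatrix, mul_apply, one_apply]

theorem conjTranspose_coordMatrix_mul {R : Type*} [NonAssocSemiring R] [StarRing R] [Fintype m]
    [DecidableEq m] (f : s → m) (A : Matrix m n R) :
    (coordMatrix R f)ᴴ * A = A.submatrix f id := by
  ext i j
  simp [coordMatrix, mul_apply, one_apply]

theorem conjTranspose_coordMatrix_mul_self {R : Type*} [NonAssocSemiring R] [StarRing R]
    [Fintype m] [DecidableEq m] [DecidableEq s] {f : s → m} (hf : Function.Injective f) :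
    (coordMatrix R f)ᴴ * coordMatrix R f = 1 := by
  rw [conjTranspose_coordMatrix_mul, coordMatrix, submatrix_submatrix]
  exact submatrix_one f hf

theorem sq_prod_norm_sub_le_norm_det_gram_submatrix [Fintype m] [Fintype n] [DecidableEq n]
    [Fintype s] [DecidableEq s] {f : s → m} {g : s → n}
    (hf : Function.Injective f) (hg : Function.Injective g) {A D : Matrix m n ℂ} {d : s → ℂ}
    (hA : A.submatrix f g = diagonal d) {ε : ℝ} (hD : ‖D‖ ≤ ε) (hd : ∀ j, ε ≤ ‖d j‖) :
    (∏ j, (‖d j‖ - ε)) ^ 2 ≤ ‖(((A + D)ᴴ * (A + D)).submatrix g g).det‖ := by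
  classical
  have compressed : (coordMatrix ℂ f)ᴴ * A * coordMatrix ℂ g = diagonal d := by
    rw [conjTranspose_coordMatrix_mul, mul_coordMatrix, submatrix_submatrix, ← hA]
    rfl
  have gram : ((A + D)ᴴ * (A + D)).submatrix g g
      = ((A + D) * coordMatrix ℂ g)ᴴ * ((A + D) * coordMatrix ℂ g) := by
    rw [mul_coordMatrix]
    rfl
  rw [gram]
  exact sq_prod_norm_sub_le_norm_det_gram (conjTranspose_coordMatrix_mul_self hf)
    (conjTranspose_coordMatrix_mul_self hg) compressed hD hd

end Coordinates

section RectangularDiagonal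

variable {r t : ℕ}

theorem specNorm_eq_l2_opNorm (A : Matrix (Fin r) (Fin t) ℂ) : specNorm A = ‖A‖ :=
  rfl

theorem lt_of_diagEntry_ne_zero {A : Matrix (Fin r) (Fin t) ℝ} {j : ℕ} (h : diagEntry A j ≠ 0) :
    j < r ∧ j < t := by
  by_contra hj
  exact h (dif_neg hj)

theorem diagEntry_map_norm_ofReal {A : Matrix (Fin r) (Fin t) ℝ} {j : ℕ}
    (hA : 0 ≤ diagEntry A j) : diagEntry ((A.map Complex.ofReal).map norm) j = diagEntry A j := by
  unfold diagEntry at hA ⊢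
  split_ifs at hA ⊢ with hj
  · simpa using hA
  · rfl

theorem exists_submatrix_eq_diagonal_of_diagEntry_ne_zero {Sig : Matrix (Fin r) (Fin t) ℂ}
    (hSdiag : ∀ (i : Fin r) (j : Fin t), (i : ℕ) ≠ (j : ℕ) → Sig i j = 0) {S : Finset (Fin t)}
    (hS : ∀ j ∈ S, diagEntry (Sig.map norm) j ≠ 0) :
    ∃ (f : S → Fin r) (d : S → ℂ), Function.Injective f ∧
      Sig.submatrix f (fun j : S ↦ j.1) = diagonal d ∧
      ∀ j : S, ‖d j‖ = diagEntry (Sig.map norm) j := by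
  have lt_rows (j : S) : (j : ℕ) < r := (lt_of_diagEntry_ne_zero (hS j j.2)).1
  refine ⟨fun j ↦ ⟨j, lt_rows j⟩, fun j ↦ Sig ⟨j, lt_rows j⟩ j, fun i j hij ↦ ?_, ?_, fun j ↦ ?_⟩
  · exact Subtype.ext (Fin.ext (Fin.mk.inj hij))
  · ext i j
    obtain rfl | hij := eq_or_ne i j
    · simp
    · rw [diagonal_apply_ne _ hij]
      exact hSdiag _ _ fun h ↦ hij (Subtype.ext (Fin.ext h))
  · rw [diagEntry, dif_pos ⟨lt_rows j, j.1.2⟩, map_apply]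

/-- `diagEntry` takes real matrices, so the modulus of the `j`-th diagonal entry of the complex
matrix `Sig` is written as the `j`-th diagonal entry of its entrywise norm. -/
theorem stmt5_general (Sig : Matrix (Fin r) (Fin t) ℂ)
    (hSdiag : ∀ (i : Fin r) (j : Fin t), (i : ℕ) ≠ (j : ℕ) → Sig i j = 0)
    {ε : ℝ} (Δ : Matrix (Fin r) (Fin t) ℂ) (hΔ : specNorm Δ ≤ ε) (S : Finset (Fin t)) :
    ((∏ j ∈ S, max (diagEntry (Sig.map norm) j - ε) 0 ^ 2 : ℝ) : ℂ) ≤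
      (((Sig + Δ)ᴴ * (Sig + Δ)).submatrix (fun i : S ↦ i.1) (fun j : S ↦ j.1)).det := by
  rw [specNorm_eq_l2_opNorm] at hΔ
  set AS := ((Sig + Δ)ᴴ * (Sig + Δ)).submatrix (fun i : S ↦ i.1) (fun j : S ↦ j.1)
  have det_nonneg : 0 ≤ AS.det :=
    ((posSemidef_conjTranspose_mul_self (Sig + Δ)).submatrix _).det_nonneg
  by_cases hS : ∀ j ∈ S, ε < diagEntry (Sig.map norm) j
  · have hε : 0 ≤ ε := (norm_nonneg _).trans hΔ
    obtain ⟨f, d, hf, hd, d_norm⟩ := exists_submatrix_eq_diagonal_of_diagEntry_ne_zero hSdiag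
      fun j hj ↦ (hε.trans_lt (hS j hj)).ne'
    have prod_eq : ∏ j ∈ S, max (diagEntry (Sig.map norm) j - ε) 0 ^ 2
        = (∏ j, (‖d j‖ - ε)) ^ 2 := by
      rw [← Finset.prod_coe_sort, ← Finset.prod_pow]
      exact Finset.prod_congr rfl fun j _ ↦ by
        rw [d_norm, max_eq_left (sub_nonneg.2 (hS j j.2).le)]
    rw [prod_eq, Complex.eq_coe_norm_of_nonneg det_nonneg, Complex.real_le_real]
    exact sq_prod_norm_sub_le_norm_det_gram_submatrix hf Subtype.val_injective hd hΔ
      fun j ↦ (d_norm j).symm ▸ (hS j j.2).le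
  · push Not at hS
    obtain ⟨j, hj, hle⟩ := hS
    rw [Finset.prod_eq_zero hj (by rw [max_eq_right (sub_nonpos.2 hle), zero_pow two_ne_zero])]
    exact_mod_cast det_nonneg

end RectangularDiagonal

theorem stmt5 (r t : ℕ) (hr : 0 < r) (ht : 0 < t)
    (Sig : Matrix (Fin r) (Fin t) ℝ)
    (hSdiag : ∀ (i : Fin r) (j : Fin t), (i : ℕ) ≠ (j : ℕ) → Sig i j = 0)
    (hSpos : ∀ j, 0 ≤ diagEntry Sig j)
    (ε : ℝ) (hε : 0 < ε)
    (Δ : Matrix (Fin r) (Fin t) ℂ) (hΔ : specNorm Δ ≤ ε)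
    (S : Finset (Fin t)) :
    let A : Matrix (Fin t) (Fin t) ℂ :=
      (Sig.map Complex.ofReal + Δ)ᴴ * (Sig.map Complex.ofReal + Δ)
    -- A(S): the principal submatrix keeping rows and columns indexed by S
    let AS : Matrix S S ℂ := Matrix.submatrix A (fun i : S => i.1) (fun j : S => j.1)
    ((AS.det).im = 0) ∧
    (∏ j ∈ S, max (diagEntry Sig j - ε) 0 ^ 2) ≤ (AS.det).re := by
  intro A AS
  have h := stmt5_general (Sig.map Complex.ofReal) (fun i j hij ↦ by simp [hSdiag i j hij]) Δ hΔ S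
  simp only [diagEntry_map_norm_ofReal (hSpos _)] at h
  exact ⟨(Complex.le_def.1 h).2.symm, (Complex.le_def.1 h).1⟩
end
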